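/- arXiv:2507.16435 — 3 statements merged into one kernel-verified Lean document; each statement's English description precedes it below -/
import Mathlib

section
/- Let k ⊂ E be a field extension and let K, L, M be intermediate fields of E/k such that: trdeg(K|k) is finite; K and M are free over k; M ⊆ L ⊆ KM (where KM denotes the compositum inside E) and trdeg(L|M) ≥ 1; K is exactly the fixed field in KM of a subgroup 𝒢 of the group of field automorphisms of KM fixing K pointwise; and σ(L) ⊆ L for every σ ∈ 𝒢. Then there exists an element y ∈ L with y ∈ K and y ∉ k. -/
universe u

/-- A bundled differential field of characteristic zero: a field together with a derivation,
given as a raw function satisfying additivity and the Leibniz rule. -/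
structure DFld : Type (u + 1) where
  carrier : Type u
  [fieldInst : Field carrier]
  [charZeroInst : CharZero carrier]
  deriv : carrier → carrier
  deriv_add : ∀ a b, deriv (a + b) = deriv a + deriv b
  deriv_mul : ∀ a b, deriv (a * b) = deriv a * b + a * deriv b

attribute [instance] DFld.fieldInst DFld.charZeroInst

/-- The result of applying the monic linear differential operator
`∂^n + a_{n-1} ∂^{n-1} + ⋯ + a_1 ∂ + a_0` (with coefficients `a`) to `y`,
where the derivation is given by `D`. -/
def LApply {E : Type u} [Field E] (D : E → E) (n : ℕ) (a : Fin n → E) (y : E) : E :=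
  D^[n] y + ∑ i : Fin n, a i * D^[(i : ℕ)] y

/-- `diffGen D k S` is the smallest differential subfield (w.r.t. the derivation `D`)
containing the subfield `k` and the set `S`; i.e. the differential field `k⟨S⟩`. -/
def diffGen {E : Type u} [Field E] (D : E → E) (k : Subfield E) (S : Set E) : Subfield E :=
  sInf {F : Subfield E | k ≤ F ∧ S ⊆ ↑F ∧ ∀ x ∈ F, D x ∈ F}

/-- The subfield of constants of a differential subfield `k`: `{x ∈ k | D x = 0}`. -/
def constantsOf {E : Type u} [Field E] (D : Derivation ℤ E E) (k : Subfield E) : Subfield E where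
  carrier := {x | x ∈ k ∧ D x = 0}
  zero_mem' := ⟨k.zero_mem, map_zero D⟩
  one_mem' := ⟨k.one_mem, D.map_one_eq_zero⟩
  add_mem' := by
    rintro a b ⟨hak, ha0⟩ ⟨hbk, hb0⟩
    exact ⟨k.add_mem hak hbk, by rw [map_add, ha0, hb0, add_zero]⟩
  neg_mem' := by
    rintro a ⟨hak, ha0⟩
    exact ⟨k.neg_mem hak, by rw [map_neg, ha0, neg_zero]⟩
  mul_mem' := by
    rintro a b ⟨hak, ha0⟩ ⟨hbk, hb0⟩
    exact ⟨k.mul_mem hak hbk, by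
      rw [Derivation.leibniz, ha0, hb0, smul_zero, smul_zero, add_zero]⟩
  inv_mem' := by
    rintro x ⟨hxk, hx0⟩
    refine ⟨k.inv_mem hxk, ?_⟩
    by_cases h : x = 0
    · simp [h]
    · have h1 : D (x * x⁻¹) = 0 := by rw [mul_inv_cancel₀ h, D.map_one_eq_zero]
      rw [Derivation.leibniz, hx0, smul_zero, add_zero, smul_eq_mul] at h1
      exact (mul_eq_zero.mp h1).resolve_left h

/-- `F` is a Picard–Vessiot extension of `k` (inside a common differential field) for the
monic linear differential operator of order `n` with (lower-order) coefficients `a`: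
both are differential subfields, the constants of `F` equal the constants of `k`,
the coefficients lie in `k`, and `F` is differentially generated over `k` by an
`n`-dimensional vector space (over the constants) of solutions. -/
def IsPVWith {E : Type u} [Field E] (D : E → E) (k F : Subfield E) (n : ℕ)
    (a : Fin n → E) : Prop :=
  k ≤ F ∧ (∀ x ∈ k, D x ∈ k) ∧ (∀ x ∈ F, D x ∈ F) ∧
  (∀ x ∈ F, D x = 0 → x ∈ k) ∧
  (∀ i, a i ∈ k) ∧
  ∃ y : Fin n → E,
    (∀ i, y i ∈ F) ∧
    (∀ i, LApply D n a (y i) = 0) ∧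
    (∀ c : Fin n → E, (∀ i, c i ∈ k ∧ D (c i) = 0) → (∑ i, c i * y i) = 0 → ∀ i, c i = 0) ∧
    diffGen D k (Set.range y) = F

/-- `F` is a Picard–Vessiot extension of `k` for some monic linear differential operator. -/
def IsPV {E : Type u} [Field E] (D : E → E) (k F : Subfield E) : Prop :=
  ∃ (n : ℕ) (a : Fin n → E), IsPVWith D k F n a

/-- Relative version: the differential subfield `F` is a Picard–Vessiot extension
of the differential subfield `kb ≤ F`. -/
def IsPVRel {E : Type u} [Field E] (D : E → E) (kb F : Subfield E)
    (hF : ∀ x ∈ F, D x ∈ F) : Prop :=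
  IsPV (fun x : ↥F => (⟨D ↑x, hF ↑x x.2⟩ : ↥F)) (Subfield.comap F.subtype kb) ⊤

/-- The ambient differential field (with derivation `D`) is a strongly normal extension of
its differential subfield `k`: it is finitely generated as a field extension of `k`, has no
new constants, and every differential embedding over `k` into a differential field extension
`M` lands in the compositum of the image of the base copy with the constants of `M`. -/
def IsSN {E : Type u} [Field E] (D : E → E) (k : Subfield E) : Prop :=
  (∀ x ∈ k, D x ∈ k) ∧
  (∃ s : Finset E, Subfield.closure (↑k ∪ ↑s) = (⊤ : Subfield E)) ∧
  (∀ x : E, D x = 0 → x ∈ k) ∧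
  ∀ (M : DFld.{u}) (ι σ : E →+* M.carrier),
    (∀ x, ι (D x) = M.deriv (ι x)) →
    (∀ x, σ (D x) = M.deriv (σ x)) →
    (∀ x ∈ k, σ x = ι x) →
    ∀ e : E, σ e ∈ Subfield.closure (Set.range ι ∪ {m : M.carrier | M.deriv m = 0})

/-- Relative version: the differential subfield `F` is a strongly normal extension of the
differential subfield `kb ≤ F`. -/
def IsSNRel {E : Type u} [Field E] (D : E → E) (kb F : Subfield E)
    (hF : ∀ x ∈ F, D x ∈ F) : Prop :=
  IsSN (fun x : ↥F => (⟨D ↑x, hF ↑x x.2⟩ : ↥F)) (Subfield.comap F.subtype kb)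

/-- `K` is a finite field extension of the subfield `M`. -/
def FinExt {E : Type u} [Field E] (M K : Subfield E) : Prop :=
  ∃ h : M ≤ K,
    letI : Algebra ↥M ↥K := (Subfield.inclusion h).toAlgebra
    Module.Finite ↥M ↥K

/-- The transcendence degree of the subfield `K` over the subfield `k`, as the supremum of the
cardinalities of subsets of `K` that are algebraically independent over `k`. -/
noncomputable def trdegOf {E : Type u} [Field E] (k K : Subfield E) : Cardinal.{u} :=
  ⨆ s : {s : Set E // s ⊆ (K : Set E) ∧ AlgebraicIndependent ↥k (fun x : ↥s => (x : E))},
    Cardinal.mk ↥(s.1)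

/-- `K` and `M` are free over `k`: every finite subset of `K` that is algebraically
independent over `k` remains algebraically independent over `M`. -/
def FreeOver {E : Type u} [Field E] (k K M : Subfield E) : Prop :=
  ∀ s : Finset E, (↑s : Set E) ⊆ (K : Set E) →
    AlgebraicIndependent ↥k (fun x : ↥(↑s : Set E) => (x : E)) →
    AlgebraicIndependent ↥M (fun x : ↥(↑s : Set E) => (x : E))

/-- `K` is a `k`-irreducible differential field: it is a finitely generated differential field
extension of `k` of transcendence degree at least 1, and every intermediate differential field
`k ⊂ M ⊆ K` has transcendence degree `0` or `trdeg(K|k)` over `k`. -/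
def IsIrred {E : Type u} [Field E] (D : E → E) (k K : Subfield E) : Prop :=
  (∃ s : Finset E, diffGen D k ↑s = K) ∧
  1 ≤ trdegOf k K ∧
  ∀ M : Subfield E, (∀ x ∈ M, D x ∈ M) → k < M → M ≤ K →
    trdegOf k M = 0 ∨ trdegOf k M = trdegOf k K

/-- `Kf` is a `d`-solvable extension of `k`: there is a tower of differential fields starting
at (a copy of) `k`, each step being a finite algebraic extension or a Picard–Vessiot extension
for an operator of order at most `d`, whose top contains (the copy of) `Kf`. -/
def IsDSolvable {E : Type u} [Field E] (D : E → E) (k Kf : Subfield E) (d : ℕ) : Prop :=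
  ∃ (Ω : DFld.{u}) (j : E →+* Ω.carrier),
    (∀ x, j (D x) = Ω.deriv (j x)) ∧
    ∃ (r : ℕ) (T : Fin (r + 1) → Subfield Ω.carrier),
      T 0 = Subfield.map j k ∧
      Subfield.map j Kf ≤ T (Fin.last r) ∧
      (∀ i, ∀ x ∈ T i, Ω.deriv x ∈ T i) ∧
      ∀ i : Fin r,
        FinExt (T i.castSucc) (T i.succ) ∨
        ∃ n ≤ d, ∃ a : Fin n → Ω.carrier, IsPVWith Ω.deriv (T i.castSucc) (T i.succ) n a

/-- `Kn` is generated over `kb`, as a differential field with the same constants, by one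
solution `z` of an inhomogeneous equation `L(y) = b` (with `L` monic over `kb` of order
`n ≤ d` and `b ∈ kb`) together with an `n`-dimensional space (over the constants) of
solutions of `L(y) = 0`. -/
def IsPVInhomLe {E : Type u} [Field E] (D : E → E) (kb Kn : Subfield E) (d : ℕ) : Prop :=
  kb ≤ Kn ∧ (∀ x ∈ kb, D x ∈ kb) ∧ (∀ x ∈ Kn, D x ∈ Kn) ∧
  (∀ x ∈ Kn, D x = 0 → x ∈ kb) ∧
  ∃ n, n ≤ d ∧ ∃ (a : Fin n → E) (b z : E) (y : Fin n → E),
    (∀ i, a i ∈ kb) ∧ b ∈ kb ∧ z ∈ Kn ∧ (∀ i, y i ∈ Kn) ∧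
    LApply D n a z = b ∧
    (∀ i, LApply D n a (y i) = 0) ∧
    (∀ c : Fin n → E, (∀ i, c i ∈ kb ∧ D (c i) = 0) → (∑ i, c i * y i) = 0 → ∀ i, c i = 0) ∧
    diffGen D kb (insert z (Set.range y)) = Kn

/-- `Kf` is a `d⁺`-solvable extension of `k`. -/
def IsDPlusSolvable {E : Type u} [Field E] (D : E → E) (k Kf : Subfield E) (d : ℕ) : Prop :=
  ∃ (Ω : DFld.{u}) (j : E →+* Ω.carrier),
    (∀ x, j (D x) = Ω.deriv (j x)) ∧
    ∃ (r : ℕ) (T : Fin (r + 1) → Subfield Ω.carrier),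
      T 0 = Subfield.map j k ∧
      Subfield.map j Kf ≤ T (Fin.last r) ∧
      (∀ i, ∀ x ∈ T i, Ω.deriv x ∈ T i) ∧
      ∀ i : Fin r,
        FinExt (T i.castSucc) (T i.succ) ∨ IsPVInhomLe Ω.deriv (T i.castSucc) (T i.succ) d

/-- `TSet D kb K` is the set of elements of `K` annihilated by some monic linear differential
operator with coefficients in `kb`. -/
def TSet {E : Type u} [Field E] (D : E → E) (kb K : Subfield E) : Set E :=
  {x | x ∈ K ∧ ∃ (n : ℕ) (a : Fin n → E), (∀ i, a i ∈ kb) ∧ LApply D n a x = 0}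

/-!
The engine is Artin's independence argument. Let `𝒢` act semilinearly on an `L`-vector space. If
an invariant vector is an `L`-linear combination of `L`-independent invariant vectors, then applying
`σ ∈ 𝒢` yields another such expression, so by uniqueness the coefficients are invariant. Hence
invariant vectors independent over the invariants of `L` stay independent over `L`; applied to
monomials, the same holds for algebraic independence.

Suppose now that `L ∩ K ⊆ M`, so that `M` contains the invariants of `L`. Since `KM` is generated by
`K` over `M`, it has a transcendence basis over `M` inside `K`. This basis is invariant, so it
remains algebraically independent over `L`. But an element of `L` transcendental over `M` could then
be added to the basis, so `L` is algebraic over `M`.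
-/

section AlgebraicIndependence

variable {R S A ι : Type*} [CommRing R] [CommRing S] [CommRing A] [Algebra R A]

theorem algebraicIndependent_iff_linearIndependent_monomials {x : ι → A} :
    AlgebraicIndependent R x ↔
      LinearIndependent R fun m : ι →₀ ℕ => m.prod fun i n => x i ^ n := by
  have haeval : (Finsupp.linearCombination R fun m : ι →₀ ℕ => m.prod fun i n => x i ^ n) =
      (MvPolynomial.aeval x).toLinearMap ∘ₗ
        (MvPolynomial.basisMonomials ι R).repr.symm.toLinearMap := by
    ext m
    simp [MvPolynomial.aeval_monomial]
  rw [LinearIndependent, haeval, LinearMap.coe_comp, LinearEquiv.coe_coe,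
    EquivLike.injective_comp, AlgHom.coe_toLinearMap, AlgebraicIndependent]

theorem isAlgebraic_of_isTranscendenceBasis_of_algebraicIndependent [Nontrivial R] [Algebra R S]
    [Algebra S A] [IsScalarTower R S A] {x : ι → A} (hxR : IsTranscendenceBasis R x)
    (hxS : AlgebraicIndependent S x) : Algebra.IsAlgebraic R S := by
  refine ⟨fun t => by_contra fun ht => ?_⟩
  have ht_indep : AlgebraicIndependent R fun _ : Unit => t :=
    algebraicIndependent_unique_type_iff.2 ht
  have hsum : AlgebraicIndependent R (Sum.elim (fun _ : Unit => algebraMap S A t) x) := by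
    refine (algebraicIndependent_equiv' (Equiv.sumComm _ _) ?_).1 (ht_indep.sumElim_comp hxS)
    ext (_ | _) <;> rfl
  exact (AlgebraicIndependent.sumElim_iff.1 hsum).2.transcendental ()
    (hxR.isAlgebraic.isAlgebraic _)

end AlgebraicIndependence

section Invariants

variable {G F L V A ι : Type*} [Group G]

theorem mem_span_range_of_isInvariant [CommRing F] [Ring L] [AddCommGroup V] [Algebra F L]
    [Module F V] [Module L V] [IsScalarTower F L V] [MulSemiringAction G L]
    [DistribMulAction G V] [SMulDistribClass G L V] [Algebra.IsInvariant F L G]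
    {v : ι → V} (hv : LinearIndependent L v) (hv_fixed : ∀ (g : G) i, g • v i = v i)
    {w : V} (hw_fixed : ∀ g : G, g • w = w) (hw : w ∈ Submodule.span L (Set.range v)) :
    w ∈ Submodule.span F (Set.range v) := by
  obtain ⟨c, rfl⟩ := Finsupp.mem_span_range_iff_exists_finsupp.1 hw
  have hc_fixed (i : ι) (g : G) : g • c i = c i := by
    have hgc : c.mapRange (g • ·) (smul_zero g) = c := by
      refine hv ?_
      calc Finsupp.linearCombination L v (c.mapRange (g • ·) (smul_zero g))
          = c.sum fun i a => (g • a) • v i := by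
            rw [Finsupp.linearCombination_apply, Finsupp.sum_mapRange_index (by simp)]
        _ = g • c.sum fun i a => a • v i := by
            simp only [Finsupp.smul_sum, smul_distrib_smul, hv_fixed]
        _ = Finsupp.linearCombination L v c := by
            rw [hw_fixed, Finsupp.linearCombination_apply]
    exact DFunLike.congr_fun hgc i
  refine Submodule.sum_mem _ fun i _ => ?_
  obtain ⟨a, ha⟩ := Algebra.IsInvariant.isInvariant (A := F) (c i) (hc_fixed i)
  simp only [← ha, algebraMap_smul]
  exact Submodule.smul_mem _ a (Submodule.subset_span ⟨i, rfl⟩)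

theorem linearIndependent_of_isInvariant [CommRing F] [DivisionRing L] [AddCommGroup V]
    [Algebra F L] [Module F V] [Module L V] [IsScalarTower F L V] [MulSemiringAction G L]
    [DistribMulAction G V] [SMulDistribClass G L V] [Algebra.IsInvariant F L G]
    {v : ι → V} (hv : LinearIndependent F v) (hv_fixed : ∀ (g : G) i, g • v i = v i) :
    LinearIndependent L v := by
  classical
  rw [linearIndependent_iff_finset_linearIndependent]
  intro s
  change LinearIndepOn L v s
  induction s using Finset.induction_on with
  | empty => simp
  | insert i s hi ih =>
    rw [Finset.coe_insert, linearIndepOn_insert (by exact_mod_cast hi)]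
    refine ⟨ih, fun hspan => ?_⟩
    rw [Set.image_eq_range] at hspan
    have hspanF := mem_span_range_of_isInvariant (F := F) ih (fun g j => hv_fixed g j)
      (fun g => hv_fixed g i) hspan
    rw [← Set.image_eq_range] at hspanF
    have : Nontrivial F := (algebraMap F L).domain_nontrivial
    exact hv.notMem_span_image (by exact_mod_cast hi) hspanF

theorem algebraicIndependent_of_isInvariant [CommRing F] [Field L] [CommRing A] [Algebra F L]
    [Algebra F A] [Algebra L A] [IsScalarTower F L A] [MulSemiringAction G L]
    [MulSemiringAction G A] [SMulDistribClass G L A] [Algebra.IsInvariant F L G]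
    {x : ι → A} (hx : AlgebraicIndependent F x) (hx_fixed : ∀ (g : G) i, g • x i = x i) :
    AlgebraicIndependent L x := by
  rw [algebraicIndependent_iff_linearIndependent_monomials] at hx ⊢
  refine linearIndependent_of_isInvariant (G := G) hx fun g m => ?_
  simp only [Finsupp.prod, Finset.smul_prod', smul_pow', hx_fixed]

theorem isAlgebraic_of_isInvariant_of_adjoin_fixedPoints_eq_top {Ω : Type*} [Field F] [Field L]
    [Field Ω] [Algebra F L] [Algebra F Ω] [Algebra L Ω] [IsScalarTower F L Ω]
    [MulSemiringAction G L] [MulSemiringAction G Ω] [SMulDistribClass G L Ω]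
    [Algebra.IsInvariant F L G]
    (hgen : IntermediateField.adjoin F (MulAction.fixedPoints G Ω) = ⊤) :
    Algebra.IsAlgebraic F L := by
  have : Algebra.IsAlgebraic (Algebra.adjoin F (MulAction.fixedPoints G Ω)) Ω :=
    ⟨fun z => IntermediateField.isAlgebraic_adjoin_iff.1 <|
      isAlgebraic_algebraMap (⟨z, hgen ▸ IntermediateField.mem_top⟩ :
        IntermediateField.adjoin F (MulAction.fixedPoints G Ω))⟩
  obtain ⟨s, hs_fixed, hs⟩ :=
    exists_isTranscendenceBasis_subset (R := F) (MulAction.fixedPoints G Ω)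
  exact isAlgebraic_of_isTranscendenceBasis_of_algebraicIndependent hs <|
    algebraicIndependent_of_isInvariant hs.1 fun g i => hs_fixed i.2 g

theorem exists_mem_fixedPoints_notMem_bot {Ω : Type*} [Field F] [Field Ω] [Algebra F Ω]
    [MulSemiringAction G Ω] {L : IntermediateField F Ω}
    (hgen : IntermediateField.adjoin F (MulAction.fixedPoints G Ω) = ⊤)
    (hstab : ∀ g : G, ∀ z ∈ L, g • z ∈ L) (htr : Algebra.Transcendental F L) :
    ∃ y ∈ L, y ∈ MulAction.fixedPoints G Ω ∧ y ∉ (⊥ : IntermediateField F Ω) := by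
  by_contra! hfixed
  have : IsInvariantSubfield G L.toSubfield := ⟨fun g z hz => hstab g z hz⟩
  let : MulSemiringAction G L := inferInstanceAs (MulSemiringAction G L.toSubfield)
  have : SMulDistribClass G L Ω := ⟨fun g a z => smul_mul' g (a : Ω) z⟩
  have : Algebra.IsInvariant F L G := by
    refine ⟨fun a ha => ?_⟩
    obtain ⟨b, hb⟩ := IntermediateField.mem_bot.1 <|
      hfixed a a.2 fun g => congrArg Subtype.val (ha g)
    exact ⟨b, Subtype.ext hb⟩
  have := isAlgebraic_of_isInvariant_of_adjoin_fixedPoints_eq_top (L := L) hgen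
  exact Algebra.transcendental_iff_not_isAlgebraic.1 htr this

end Invariants

section Subfields

variable {E : Type u} [Field E]

theorem exists_transcendental_of_trdegOf_ne_zero {M L : Subfield E} (h : trdegOf M L ≠ 0) :
    ∃ t ∈ L, Transcendental M t := by
  contrapose! h
  refine le_antisymm (ciSup_le' ?_) zero_le
  rintro ⟨s, hsL, hs⟩
  have : IsEmpty s := ⟨fun t => h t (hsL t.2) (hs.transcendental t)⟩
  simp

theorem eq_top_of_comap_subtype_le {K M : Subfield E} {F : Subfield ↥(K ⊔ M)}
    (hK : K.comap (K ⊔ M).subtype ≤ F) (hM : M.comap (K ⊔ M).subtype ≤ F) : F = ⊤ := by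
  have hle : K ⊔ M ≤ F.map (K ⊔ M).subtype :=
    sup_le (fun x hx => ⟨⟨x, le_sup_left (a := K) hx⟩, hK hx, rfl⟩)
      (fun x hx => ⟨⟨x, le_sup_right (a := K) hx⟩, hM hx, rfl⟩)
  refine eq_top_iff.2 fun z _ => ?_
  obtain ⟨w, hw, hwz⟩ := hle z.2
  rwa [← Subtype.ext hwz]

theorem stmt8_general {K L M : Subfield E} (hML : M ≤ L) (hLKM : L ≤ K ⊔ M)
    (htdL : 1 ≤ trdegOf M L) {G : Type*} [Group G] [MulSemiringAction G ↥(K ⊔ M)]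
    (hfixed : ∀ z : ↥(K ⊔ M), z ∈ MulAction.fixedPoints G ↥(K ⊔ M) ↔ (z : E) ∈ K)
    (hstab : ∀ (g : G) (z : ↥(K ⊔ M)), (z : E) ∈ L → ((g • z : ↥(K ⊔ M)) : E) ∈ L) :
    ∃ y ∈ L, y ∈ K ∧ y ∉ M := by
  obtain ⟨t, htL, ht⟩ :=
    exists_transcendental_of_trdegOf_ne_zero (Cardinal.one_le_iff_ne_zero.1 htdL)
  let : Algebra M ↥(K ⊔ M) := (Subfield.inclusion le_sup_right).toAlgebra
  have : IsScalarTower M ↥(K ⊔ M) E := .of_algebraMap_eq fun _ => rfl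
  let L' : IntermediateField M ↥(K ⊔ M) :=
    (L.comap (K ⊔ M).subtype).toIntermediateField fun x => hML x.2
  have hgen : IntermediateField.adjoin M (MulAction.fixedPoints G ↥(K ⊔ M)) = ⊤ := by
    refine IntermediateField.toSubfield_injective (eq_top_of_comap_subtype_le ?_ ?_)
    · exact fun z hz => IntermediateField.subset_adjoin _ _ ((hfixed z).2 hz)
    · exact fun z hz => IntermediateField.algebraMap_mem _ (⟨z, hz⟩ : M)
  have htr : Algebra.Transcendental M L' := by
    refine ⟨⟨⟨t, hLKM htL⟩, htL⟩, ?_⟩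
    rwa [← transcendental_algebraMap_iff (algebraMap L' E).injective]
  obtain ⟨y, hyL, hy_fixed, hyM⟩ := exists_mem_fixedPoints_notMem_bot hgen hstab htr
  exact ⟨y, hyL, (hfixed y).1 hy_fixed, fun hy =>
    hyM (IntermediateField.algebraMap_mem ⊥ (⟨y, hy⟩ : M))⟩

end Subfields

/-- (Field-theoretic descent.) If `K`, `L`, `M` are intermediate fields of
`E/k` with `trdeg(K|k)` finite, `K` and `M` free over `k`, `M ⊆ L ⊆ KM`, `trdeg(L|M) ≥ 1`,
and `K` is the fixed field of a group `𝒢` of automorphisms of `KM` fixing `K` pointwise and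
stabilizing `L`, then `(K \ k) ∩ L` is nonempty. -/
theorem stmt8 {E : Type u} [Field E] (k K L M : Subfield E)
    (hkK : k ≤ K) (hkL : k ≤ L) (hkM : k ≤ M)
    (htd : trdegOf k K < Cardinal.aleph0)
    (hfree : FreeOver k K M)
    (hML : M ≤ L) (hLKM : L ≤ K ⊔ M)
    (htdL : 1 ≤ trdegOf M L)
    (G : Subgroup (↥(K ⊔ M) ≃+* ↥(K ⊔ M)))
    (hfix : ∀ σ ∈ G, ∀ z : ↥(K ⊔ M), (z : E) ∈ K → σ z = z)
    (hfixed : ∀ z : ↥(K ⊔ M), (∀ σ ∈ G, σ z = z) → (z : E) ∈ K)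
    (hstab : ∀ σ ∈ G, ∀ z : ↥(K ⊔ M), (z : E) ∈ L → ((σ z : ↥(K ⊔ M)) : E) ∈ L) :
    ∃ y : E, y ∈ L ∧ y ∈ K ∧ y ∉ k := by
  obtain ⟨y, hyL, hyK, hyM⟩ := stmt8_general (G := G) hML hLKM htdL
    (fun z => ⟨fun hz => hfixed z fun σ hσ => hz ⟨σ, hσ⟩, fun hz σ => hfix σ σ.2 z hz⟩)
    (fun σ => hstab σ σ.2)
  exact ⟨y, hyL, hyK, fun hyk => hyM (hkM hyk)⟩
end

section
/- Let k ⊂ E be a field extension and let K, L, M be intermediate fields of E/k such that: trdeg(K|k) is finite; K and M are free over k; M ⊆ L ⊆ KM and trdeg(L|M) ≥ 1; K is exactly the fixed field in KM of a subgroup 𝒢 of the group of field automorphisms of KM fixing K pointwise; σ(L) ⊆ L and σ(M) = M for every σ ∈ 𝒢. Suppose moreover that L = M(η) for an element η ∈ L transcendental over M, and that for every σ ∈ 𝒢 there exists a_σ ∈ M with σ(η) = a_σ·η. Then there exist an element x ∈ M and a positive integer l such that x·η^l ∈ K and x·η^l ∉ k. -/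
universe u

/-!
A nonzero `M`-subspace `W` of the `M`-span of the `𝒢`-invariants that is stable under `𝒢` contains a
nonzero invariant: in a shortest vector of `W`, normalized to have one coefficient equal to `1`,
applying `σ ∈ 𝒢` and subtracting gives a shorter vector, which must vanish. Let `A = M[K]`, which is
the `M`-span of `K`, and suppose `σ η = a_σ η`. The space of `q ∈ A` with `q η ∈ A` is stable, and
nonzero because `η ∈ KM = Frac A`, so it contains a nonzero `q ∈ K`, and `η = q⁻¹ (q η) ∈ A`. Now
`M η ⊆ A` is stable as well, so it contains a nonzero element of `K`; hence already `l = 1` works.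
-/

section Descent

open Submodule

variable {G M V : Type*} [Monoid G] [DivisionRing M] [SMul G M] [AddCommGroup V] [Module M V]
  [DistribMulAction G V] [SMulDistribClass G M V]

theorem smul_mem_span_of_subset_fixedPoints {s : Set V} (hs : s ⊆ MulAction.fixedPoints G V)
    (g : G) {v : V} (hv : v ∈ span M s) : g • v ∈ span M s := by
  induction hv using span_induction with
  | mem v hv => rw [hs hv g]; exact subset_span hv
  | zero => rw [smul_zero]; exact zero_mem _
  | add v w _ _ hv hw => rw [smul_add]; exact add_mem hv hw
  | smul c v _ hv => rw [smul_distrib_smul]; exact smul_mem _ _ hv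

theorem exists_mem_fixedPoints_of_mem_span_finset {W : Submodule M V}
    (hW : ∀ (g : G), ∀ w ∈ W, g • w ∈ W) (s : Finset V)
    (hs : (s : Set V) ⊆ MulAction.fixedPoints G V) {w : V} (hwW : w ∈ W) (hw : w ≠ 0)
    (hws : w ∈ span M (s : Set V)) : ∃ v ∈ W, v ≠ 0 ∧ v ∈ MulAction.fixedPoints G V := by
  classical
  induction s using Finset.induction_on generalizing w with
  | empty => simp_all
  | insert u s _ ih =>
    rw [Finset.coe_insert] at hs hws
    obtain ⟨hu, hs⟩ := Set.insert_subset_iff.mp hs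
    obtain ⟨c, y, hy, rfl⟩ := mem_span_insert.mp hws
    obtain rfl | hc := eq_or_ne c 0
    · exact ih hs hwW hw (by simpa only [zero_smul, zero_add] using hy)
    have hnorm : c⁻¹ • (c • u + y) = u + c⁻¹ • y := by rw [smul_add, inv_smul_smul₀ hc]
    have hvW : u + c⁻¹ • y ∈ W := hnorm ▸ W.smul_mem c⁻¹ hwW
    by_cases hfix : u + c⁻¹ • y ∈ MulAction.fixedPoints G V
    · exact ⟨_, hvW, hnorm ▸ smul_ne_zero (inv_ne_zero hc) hw, hfix⟩
    obtain ⟨g, hg⟩ := not_forall.mp hfix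
    have hdiff : g • (u + c⁻¹ • y) - (u + c⁻¹ • y) = g • c⁻¹ • y - c⁻¹ • y := by
      rw [smul_add, hu g, add_sub_add_left_eq_sub]
    have hy' : c⁻¹ • y ∈ span M (s : Set V) := smul_mem _ _ hy
    exact ih hs (sub_mem (hW g _ hvW) hvW) (sub_ne_zero.mpr hg)
      (hdiff ▸ sub_mem (smul_mem_span_of_subset_fixedPoints hs g hy') hy')

theorem exists_mem_fixedPoints_of_le_span {W : Submodule M V}
    (hW : ∀ (g : G), ∀ w ∈ W, g • w ∈ W) (hspan : W ≤ span M (MulAction.fixedPoints G V))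
    (hne : W ≠ ⊥) : ∃ v ∈ W, v ≠ 0 ∧ v ∈ MulAction.fixedPoints G V := by
  obtain ⟨w, hwW, hw⟩ := exists_mem_ne_zero_of_ne_bot hne
  obtain ⟨s, hs, hws⟩ := mem_span_finite_of_mem_span (hspan hwW)
  exact exists_mem_fixedPoints_of_mem_span_finset hW s hs hwW hw hws

end Descent

theorem adjoin_toSubmodule_eq_span {R A σ : Type*} [CommSemiring R] [Semiring A] [Algebra R A]
    [SetLike σ A] [SubmonoidClass σ A] (S : σ) :
    (Algebra.adjoin R (S : Set A)).toSubmodule = Submodule.span R (S : Set A) := by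
  have hclosure : Submonoid.closure (S : Set A) = Submonoid.ofClass S :=
    Submonoid.closure_eq (Submonoid.ofClass S)
  rw [Algebra.adjoin_eq_span, hclosure, Submonoid.coe_ofClass]

section SemiInvariant

open Submodule

variable {G M F : Type*} [Monoid G] [Field M] [SMul G M] [Field F] [Algebra M F]
  [MulSemiringAction G F] [SMulDistribClass G M F]

theorem smul_mem_adjoin_fixedPoints (g : G) {q : F}
    (hq : q ∈ Algebra.adjoin M (FixedPoints.subfield G F : Set F)) :
    g • q ∈ Algebra.adjoin M (FixedPoints.subfield G F : Set F) := by
  rw [← Subalgebra.mem_toSubmodule, adjoin_toSubmodule_eq_span] at hq ⊢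
  exact smul_mem_span_of_subset_fixedPoints le_rfl g hq

theorem mem_algebraAdjoin_fixedPoints_of_smul_eq {η : F}
    (hη : η ∈ IntermediateField.adjoin M (FixedPoints.subfield G F : Set F))
    (hscale : ∀ g : G, ∃ a : M, g • η = a • η) :
    η ∈ Algebra.adjoin M (FixedPoints.subfield G F : Set F) := by
  obtain rfl | hη0 := eq_or_ne η 0
  · exact zero_mem _
  set A := Algebra.adjoin M (FixedPoints.subfield G F : Set F)
  let W : Submodule M F := A.toSubmodule ⊓ A.toSubmodule.comap (LinearMap.mulRight M η)
  have hW (g : G) : ∀ q ∈ W, g • q ∈ W := by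
    rintro q ⟨hq, hqη : q * η ∈ A⟩
    obtain ⟨a, ha⟩ := hscale g
    have ha0 : a ≠ 0 := by
      rintro rfl
      exact hη0 ((map_eq_zero (MulSemiringAction.toRingHom G F g)).mp (ha.trans (zero_smul M η)))
    have hgqη : a⁻¹ • g • (q * η) = g • q * η := by
      rw [smul_mul', ha, mul_smul_comm, inv_smul_smul₀ ha0]
    exact ⟨smul_mem_adjoin_fixedPoints g hq,
      show g • q * η ∈ A from hgqη ▸ A.smul_mem (smul_mem_adjoin_fixedPoints g hqη) a⁻¹⟩
  have hne : W ≠ ⊥ := by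
    obtain ⟨p, hp, q, hq, rfl⟩ := IntermediateField.mem_adjoin_iff_div.mp hη
    have hq0 : q ≠ 0 := (div_ne_zero_iff.mp hη0).2
    have hqη : q * (p / q) ∈ A := by rwa [mul_div_cancel₀ p hq0]
    exact (Submodule.ne_bot_iff W).mpr ⟨q, ⟨hq, hqη⟩, hq0⟩
  obtain ⟨q, ⟨-, hqη : q * η ∈ A⟩, hq0, hqfix⟩ := exists_mem_fixedPoints_of_le_span hW
    (inf_le_left.trans (adjoin_toSubmodule_eq_span _).le) hne
  have hqinv : q⁻¹ ∈ A :=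
    Algebra.subset_adjoin (inv_mem (show q ∈ FixedPoints.subfield G F from hqfix))
  exact inv_mul_cancel_left₀ hq0 η ▸ mul_mem hqinv hqη

theorem exists_smul_mem_fixedPoints_of_smul_eq {η : F}
    (hη : η ∈ IntermediateField.adjoin M (FixedPoints.subfield G F : Set F))
    (hscale : ∀ g : G, ∃ a : M, g • η = a • η) :
    ∃ x : M, x ≠ 0 ∧ x • η ∈ MulAction.fixedPoints G F := by
  obtain rfl | hη0 := eq_or_ne η 0
  · exact ⟨1, one_ne_zero, fun g => by rw [smul_zero, smul_zero]⟩
  have hstable (g : G) : ∀ w ∈ span M {η}, g • w ∈ span M {η} := by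
    intro w hw
    obtain ⟨c, rfl⟩ := mem_span_singleton.mp hw
    obtain ⟨a, ha⟩ := hscale g
    rw [smul_distrib_smul, ha]
    exact smul_mem _ _ (smul_mem _ _ (mem_span_singleton_self η))
  have hspan : span M {η} ≤ span M (FixedPoints.subfield G F : Set F) := by
    rw [← adjoin_toSubmodule_eq_span, span_singleton_le_iff_mem]
    exact mem_algebraAdjoin_fixedPoints_of_smul_eq hη hscale
  obtain ⟨v, hv, hv0, hvfix⟩ := exists_mem_fixedPoints_of_le_span hstable hspan
    (span_singleton_eq_bot.not.mpr hη0)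
  obtain ⟨x, rfl⟩ := mem_span_singleton.mp hv
  exact ⟨x, (smul_ne_zero_iff.mp hv0).1, hvfix⟩

end SemiInvariant

theorem subfieldComap_sup_of_le_fieldRange {F E : Type*} [Field F] [Field E] {f : F →+* E}
    {K M : Subfield E} (hK : K ≤ f.fieldRange) (hM : M ≤ f.fieldRange) :
    (K ⊔ M).comap f = K.comap f ⊔ M.comap f := by
  rw [← Subfield.comap_map f (K.comap f ⊔ M.comap f), Subfield.map_sup,
    Subfield.map_comap_eq_self hK, Subfield.map_comap_eq_self hM]

theorem stmt9_general {E G : Type*} [Field E] [Monoid G] (K M : Subfield E)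
    [MulSemiringAction G ↥(K ⊔ M)] (hK : ∀ z : ↥(K ⊔ M), (∀ g : G, g • z = z) ↔ (z : E) ∈ K)
    (hM : ∀ (g : G) (z : ↥(K ⊔ M)), (z : E) ∈ M → ((g • z : ↥(K ⊔ M)) : E) ∈ M)
    (η : ↥(K ⊔ M)) (hηM : (η : E) ∉ M)
    (hscale : ∀ g : G, ∃ a ∈ M, ((g • η : ↥(K ⊔ M)) : E) = a * η) :
    ∃ x ∈ M, x * η ∈ K ∧ x * η ∉ M := by
  let M' : Subfield ↥(K ⊔ M) := M.comap (K ⊔ M).subtype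
  have : IsInvariantSubfield G M' := ⟨fun g {z} => hM g z⟩
  have : SMulDistribClass G M' ↥(K ⊔ M) := ⟨fun g m z => smul_mul' g (m : ↥(K ⊔ M)) z⟩
  have hfixed : FixedPoints.subfield G ↥(K ⊔ M) = K.comap (K ⊔ M).subtype := Subfield.ext hK
  have hη : η ∈ IntermediateField.adjoin M' (FixedPoints.subfield G ↥(K ⊔ M) : Set ↥(K ⊔ M)) := by
    set L := IntermediateField.adjoin M' (FixedPoints.subfield G ↥(K ⊔ M) : Set ↥(K ⊔ M))
    have hKL : K.comap (K ⊔ M).subtype ≤ L.toSubfield :=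
      hfixed ▸ IntermediateField.subset_adjoin M' _
    have hML : M' ≤ L.toSubfield := fun m hm => L.algebraMap_mem ⟨m, hm⟩
    have hsup : (K ⊔ M).comap (K ⊔ M).subtype = K.comap (K ⊔ M).subtype ⊔ M' :=
      subfieldComap_sup_of_le_fieldRange
        (by rw [Subfield.fieldRange_subtype]; exact le_sup_left)
        (by rw [Subfield.fieldRange_subtype]; exact le_sup_right)
    exact hsup.le.trans (sup_le hKL hML) η.2
  have hscale' (g : G) : ∃ a : M', g • η = a • η := by
    obtain ⟨a, haM, ha⟩ := hscale g
    exact ⟨⟨⟨a, le_sup_right (a := K) haM⟩, haM⟩, Subtype.ext ha⟩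
  obtain ⟨x, hx0, hx⟩ := exists_smul_mem_fixedPoints_of_smul_eq hη hscale'
  have hxE : (x : E) ≠ 0 := fun h => hx0 (Subtype.ext (Subtype.ext h))
  exact ⟨x, x.2, (hK _).mp hx, fun h => hηM <|
    inv_mul_cancel_left₀ hxE (η : E) ▸ mul_mem (inv_mem (show (x : E) ∈ M from x.2)) h⟩

/-- (Field-theoretic descent, multiplicative form.) In the situation of the
previous descent statement, if moreover `σ(M) = M` for all `σ ∈ 𝒢`, `L = M(η)` with `η`
transcendental over `M`, and `σ(η) = a_σ · η` with `a_σ ∈ M` for every `σ ∈ 𝒢`, then there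
are `x ∈ M` and a positive integer `l` with `x·η^l ∈ K` and `x·η^l ∉ k`. -/
theorem stmt9 {E : Type u} [Field E] (k K L M : Subfield E)
    (hkK : k ≤ K) (hkL : k ≤ L) (hkM : k ≤ M)
    (htd : trdegOf k K < Cardinal.aleph0)
    (hfree : FreeOver k K M)
    (hML : M ≤ L) (hLKM : L ≤ K ⊔ M)
    (htdL : 1 ≤ trdegOf M L)
    (G : Subgroup (↥(K ⊔ M) ≃+* ↥(K ⊔ M)))
    (hfix : ∀ σ ∈ G, ∀ z : ↥(K ⊔ M), (z : E) ∈ K → σ z = z)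
    (hfixed : ∀ z : ↥(K ⊔ M), (∀ σ ∈ G, σ z = z) → (z : E) ∈ K)
    (hstab : ∀ σ ∈ G, ∀ z : ↥(K ⊔ M), (z : E) ∈ L → ((σ z : ↥(K ⊔ M)) : E) ∈ L)
    (hMstab : ∀ σ ∈ G, ∀ z : ↥(K ⊔ M), (((σ z : ↥(K ⊔ M)) : E) ∈ M ↔ (z : E) ∈ M))
    (η : E) (hηL : η ∈ L) (hηF : η ∈ K ⊔ M)
    (hηtr : Transcendental ↥M η)
    (hLgen : L = Subfield.closure (insert η (M : Set E)))
    (hscale : ∀ σ ∈ G, ∃ a ∈ M, ((σ ⟨η, hηF⟩ : ↥(K ⊔ M)) : E) = a * η) :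
    ∃ x ∈ M, ∃ l : ℕ, 0 < l ∧ x * η ^ l ∈ K ∧ x * η ^ l ∉ k := by
  obtain ⟨x, hxM, hxK, hxM'⟩ := stmt9_general (G := G) K M
    (fun z => ⟨fun h => hfixed z fun σ hσ => h ⟨σ, hσ⟩, fun hz σ => hfix σ σ.2 z hz⟩)
    (fun σ z => (hMstab σ σ.2 z).mpr) ⟨η, hηF⟩
    (fun h => hηtr (isAlgebraic_algebraMap (⟨η, h⟩ : M))) (fun σ => hscale σ σ.2)
  exact ⟨x, hxM, 1, one_pos, by rwa [pow_one], by rw [pow_one]; exact fun h => hxM' (hkM h)⟩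
end

section
/- Let k be a differential field of characteristic zero whose field of constants C is algebraically closed, and let k ⊂ K ⊆ E be differential fields such that the field of constants of E equals C. Suppose y ∈ E is transcendental over k, algebraic over K, and satisfies L(y) = 0 for some monic linear differential operator L over k. Then there exists an element x ∈ K that is transcendental over k and satisfies some monic linear homogeneous differential equation with coefficients in k. -/
/-!
Call an element D-finite over `k` if it satisfies a monic linear differential equation over `k`.
Equivalently (for `k` Noetherian) it lies in a finitely generated `k`-submodule stable under the
derivation; multiplying such submodules shows that powers of D-finite elements are D-finite.

The trace `Tr` of `K(y)` over `K` is `k`-linear and commutes with the derivation, so every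
`Tr(yⁱ) ∈ K` is D-finite over `k`. They cannot all be algebraic over `k`: as the trace form is
nondegenerate, the vectors `(Tr(yⁱ⁺ʲ))_{j < [K(y) : K]}`, `i ∈ ℕ`, satisfy the same `K`-linear
relations as the powers `yⁱ`, so if their entries lie in a field `F` algebraic over `k`, a linear
dependence over `F` between finitely many of them makes `y` algebraic over `F`, hence over `k`.
-/

universe u

section DifferentialAlgebra

open scoped Differential

variable {k A : Type*} [CommRing k] [CommRing A] [Algebra k A] [Differential k] [Differential A]
  [DifferentialAlgebra k A]

theorem leibniz_smul (c : k) (v : A) : (c • v)′ = c • v′ + c′ • v := by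
  rw [Algebra.smul_def, Derivation.leibniz, deriv_algebraMap, smul_eq_mul, smul_eq_mul, mul_comm v,
    ← Algebra.smul_def, ← Algebra.smul_def]

theorem deriv_mem_span {S : Set A} (hS : ∀ s ∈ S, s′ ∈ Submodule.span k S) :
    ∀ v ∈ Submodule.span k S, v′ ∈ Submodule.span k S := by
  intro v hv
  induction hv using Submodule.span_induction with
  | mem s hs => exact hS s hs
  | zero => simp
  | add v w _ _ hv hw => rw [map_add]; exact add_mem hv hw
  | smul c v hv hv' =>
    rw [leibniz_smul]
    exact add_mem (Submodule.smul_mem _ _ hv') (Submodule.smul_mem _ _ hv)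

end DifferentialAlgebra

section DFinite

open Function
open scoped Differential

/-- An element `x` of a differential `k`-algebra is *D-finite* over `k` if it is annihilated by a
monic linear differential operator `∂ⁿ + a_{n-1} ∂ⁿ⁻¹ + ⋯ + a₀` with coefficients in `k`. The
order `n = 0` is allowed and forces `x = 0`. -/
def IsDFinite (k : Type*) {A : Type*} [CommRing k] [CommRing A] [Algebra k A] [Differential A]
    (x : A) : Prop :=
  ∃ (n : ℕ) (a : Fin n → k),
    Differential.deriv^[n] x + ∑ i, a i • Differential.deriv^[(i : ℕ)] x = 0

variable {k A B : Type*} [CommRing k] [CommRing A] [CommRing B] [Algebra k A] [Algebra k B]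
  [Differential A] [Differential B]

theorem map_iterate_deriv_add_sum_smul (f : A →ₗ[k] B) (hf : ∀ x, f x′ = (f x)′) {n : ℕ}
    (a : Fin n → k) (x : A) :
    f (Differential.deriv^[n] x + ∑ i, a i • Differential.deriv^[(i : ℕ)] x) =
      Differential.deriv^[n] (f x) + ∑ i, a i • Differential.deriv^[(i : ℕ)] (f x) := by
  have map_iterate (m : ℕ) : f (Differential.deriv^[m] x) = Differential.deriv^[m] (f x) :=
    (show Semiconj f Differential.deriv Differential.deriv from hf).iterate_right m x
  simp only [map_add, map_sum, map_smul, map_iterate]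

theorem IsDFinite.map {x : A} (hx : IsDFinite k x) (f : A →ₗ[k] B) (hf : ∀ x, f x′ = (f x)′) :
    IsDFinite k (f x) := by
  obtain ⟨n, a, hL⟩ := hx
  exact ⟨n, a, by rw [← map_iterate_deriv_add_sum_smul f hf, hL, map_zero]⟩

theorem isDFinite_algebraMap_iff [Algebra A B] [IsScalarTower k A B] [FaithfulSMul A B]
    [DifferentialAlgebra A B] {x : A} : IsDFinite k (algebraMap A B x) ↔ IsDFinite k x := by
  let f : A →ₗ[k] B := (IsScalarTower.toAlgHom k A B).toLinearMap
  have hf (x : A) : f x′ = (f x)′ := (deriv_algebraMap x).symm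
  refine ⟨fun ⟨n, a, hL⟩ ↦ ⟨n, a, ?_⟩, fun hx ↦ hx.map f hf⟩
  refine FaithfulSMul.algebraMap_injective A B ?_
  rw [map_zero]
  exact (map_iterate_deriv_add_sum_smul f hf a x).trans hL

theorem isDFinite_one : IsDFinite k (1 : A) :=
  ⟨1, 0, by simp⟩

theorem isDFinite_of_mem_fg_submodule [IsNoetherianRing k] {V : Submodule k A} (hV : V.FG)
    (hderiv : ∀ v ∈ V, v′ ∈ V) {x : A} (hx : x ∈ V) : IsDFinite k x := by
  have iterate_mem (n : ℕ) : Differential.deriv^[n] x ∈ V := by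
    induction n with
    | zero => exact hx
    | succ n ih => rw [iterate_succ_apply']; exact hderiv _ ih
  let w (n : ℕ) : V := ⟨Differential.deriv^[n] x, iterate_mem n⟩
  let W : ℕ →o Submodule k V :=
    ⟨fun n ↦ Submodule.span k (Set.range fun i : Fin n ↦ w i), fun m n hmn ↦
      Submodule.span_mono <| Set.range_subset_iff.2 fun i ↦ ⟨i.castLE hmn, rfl⟩⟩
  have : Module.Finite k V := Module.Finite.iff_fg.2 hV
  obtain ⟨n, hn⟩ := monotone_stabilizes_iff_noetherian.2 inferInstance W
  have mem_span : w n ∈ W n := by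
    rw [hn (n + 1) n.le_succ]
    exact Submodule.subset_span ⟨Fin.last n, rfl⟩
  obtain ⟨c, hc⟩ := (Submodule.mem_span_range_iff_exists_fun k).1 mem_span
  have hcx : ∑ i, c i • Differential.deriv^[(i : ℕ)] x = Differential.deriv^[n] x := by
    simpa [w] using congrArg V.subtype hc
  exact ⟨n, -c, by simp [hcx]⟩

section DifferentialAlgebra

variable [Differential k] [DifferentialAlgebra k A]

theorem IsDFinite.exists_fg_submodule {x : A} (hx : IsDFinite k x) :
    ∃ V : Submodule k A, V.FG ∧ x ∈ V ∧ ∀ v ∈ V, v′ ∈ V := by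
  obtain ⟨n, a, hL⟩ := hx
  let V : Submodule k A :=
    Submodule.span k (Set.range fun i : Fin n ↦ Differential.deriv^[(i : ℕ)] x)
  have iterate_mem_of_lt {i : ℕ} (hi : i < n) : Differential.deriv^[i] x ∈ V :=
    Submodule.subset_span ⟨⟨i, hi⟩, rfl⟩
  have iterate_mem {i : ℕ} (hi : i ≤ n) : Differential.deriv^[i] x ∈ V := by
    obtain hi | rfl := hi.lt_or_eq
    · exact iterate_mem_of_lt hi
    · rw [eq_neg_of_add_eq_zero_left hL]
      exact neg_mem (sum_mem fun j _ ↦ V.smul_mem _ (iterate_mem_of_lt j.2))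
  refine ⟨V, Submodule.fg_span (Set.finite_range _), iterate_mem n.zero_le, deriv_mem_span ?_⟩
  rintro _ ⟨i, rfl⟩
  simpa only [iterate_succ_apply'] using iterate_mem i.2

theorem IsDFinite.mul [IsNoetherianRing k] {x y : A} (hx : IsDFinite k x) (hy : IsDFinite k y) :
    IsDFinite k (x * y) := by
  obtain ⟨V, hV, hxV, hV'⟩ := hx.exists_fg_submodule
  obtain ⟨W, hW, hyW, hW'⟩ := hy.exists_fg_submodule
  refine isDFinite_of_mem_fg_submodule (hV.mul hW) (fun u hu ↦ ?_) (Submodule.mul_mem_mul hxV hyW)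
  induction hu using Submodule.mul_induction_on' with
  | mem_mul_mem v hv w hw =>
    rw [Derivation.leibniz, smul_eq_mul, smul_eq_mul, mul_comm w]
    exact add_mem (Submodule.mul_mem_mul hv (hW' w hw)) (Submodule.mul_mem_mul (hV' v hv) hw)
  | add u _ u' _ hu hu' => rw [map_add]; exact add_mem hu hu'

theorem IsDFinite.pow [IsNoetherianRing k] {x : A} (hx : IsDFinite k x) (n : ℕ) :
    IsDFinite k (x ^ n) := by
  induction n with
  | zero => rw [pow_zero]; exact isDFinite_one
  | succ n ih => rw [pow_succ]; exact ih.mul hx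

end DifferentialAlgebra

end DFinite

section Trace

open scoped Differential

variable {R S ι : Type*} [CommRing R] [CommRing S] [Algebra R S] [Differential R] [Differential S]
  [DifferentialAlgebra R S]

theorem repr_deriv [Fintype ι] (b : Module.Basis ι R S) (v : S) (i : ι) :
    b.repr v′ i = (b.repr v i)′ + ∑ j, b.repr v j * b.repr (b j)′ i := by
  classical
  have deriv_eq : v′ = ∑ j, ((b.repr v j)′ • b j + b.repr v j • (b j)′) := by
    conv_lhs => rw [← b.sum_repr v]
    simp only [map_sum, leibniz_smul, add_comm]
  rw [deriv_eq]
  simp [Finset.sum_add_distrib, Finsupp.single_apply]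

/-- The commutator of the derivation with multiplication by `s` is multiplication by `s′`; in the
coordinates of `b` the derivation is coordinatewise differentiation plus the matrix with columns
`(b j)′`. -/
theorem leftMulMatrix_deriv [Fintype ι] [DecidableEq ι] (b : Module.Basis ι R S) (s : S) :
    Algebra.leftMulMatrix b s′ + Algebra.leftMulMatrix b s * b.toMatrix (fun j ↦ (b j)′) =
      (Algebra.leftMulMatrix b s).map Differential.deriv +
        b.toMatrix (fun j ↦ (b j)′) * Algebra.leftMulMatrix b s := by
  ext i j
  have repr_mul_deriv : b.repr (s * (b j)′) i =
      (Algebra.leftMulMatrix b s * b.toMatrix (fun j ↦ (b j)′)) i j :=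
    (congrFun (Algebra.leftMulMatrix_mulVec_repr b s (b j)′) i).symm
  have repr_deriv_mul := repr_deriv b (s * b j) i
  rw [Derivation.leibniz, smul_eq_mul, smul_eq_mul, map_add, Finsupp.add_apply, repr_mul_deriv,
    mul_comm (b j), add_comm] at repr_deriv_mul
  simpa only [Matrix.add_apply, Matrix.map_apply, Matrix.mul_apply,
    Algebra.leftMulMatrix_eq_repr_mul, Module.Basis.toMatrix_apply, mul_comm] using repr_deriv_mul

theorem trace_deriv [Module.Free R S] [Module.Finite R S] (s : S) :
    Algebra.trace R S s′ = (Algebra.trace R S s)′ := by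
  classical
  let b := Module.Free.chooseBasis R S
  have trace_leftMulMatrix := congrArg Matrix.trace (leftMulMatrix_deriv b s)
  rw [Matrix.trace_add, Matrix.trace_add, Matrix.trace_mul_comm, add_left_inj]
    at trace_leftMulMatrix
  rw [Algebra.trace_eq_matrix_trace b, Algebra.trace_eq_matrix_trace b, trace_leftMulMatrix]
  simp [Matrix.trace]

theorem IsDFinite.trace {k : Type*} [CommRing k] [Algebra k R] [Algebra k S] [IsScalarTower k R S]
    [Module.Free R S] [Module.Finite R S] {s : S} (hs : IsDFinite k s) :
    IsDFinite k (Algebra.trace R S s) :=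
  hs.map ((Algebra.trace R S).restrictScalars k) trace_deriv

end Trace

section TracePow

open Polynomial

variable {k K L : Type*} [Field k] [Field K] [Field L] [Algebra k K] [Algebra K L] [Algebra k L]
  [IsScalarTower k K L] [Algebra.IsSeparable K L]

theorem eq_zero_of_trace_mul_gen_pow (pb : PowerBasis K L) {v : L}
    (hv : ∀ j : Fin pb.dim, Algebra.trace K L (v * pb.gen ^ (j : ℕ)) = 0) : v = 0 := by
  have : FiniteDimensional K L := pb.finite
  have traceForm_eq_zero : Algebra.traceForm K L v = 0 := pb.basis.ext fun j ↦ by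
    rw [pb.basis_eq_pow]; exact hv j
  exact (traceForm_nondegenerate K L).1 v fun w ↦ by rw [traceForm_eq_zero]; rfl

theorem isAlgebraic_of_trace_gen_pow_mem_range (pb : PowerBasis K L)
    (h : ∀ i : ℕ, Algebra.trace K L (pb.gen ^ i) ∈ (algebraMap k K).range) :
    IsAlgebraic k pb.gen := by
  choose τ hτ using h
  let T : k[X] →ₗ[k] Fin pb.dim → k := (basisMonomials k).constr k fun i j ↦ τ (i + j)
  have algebraMap_T (p : k[X]) (j : Fin pb.dim) :
      algebraMap k K (T p j) = Algebra.trace K L (aeval pb.gen p * pb.gen ^ (j : ℕ)) := by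
    induction p using Polynomial.induction_on' with
    | add p q hp hq => simp only [map_add, Pi.add_apply, hp, hq, add_mul]
    | monomial i c =>
      have T_monomial : T (monomial i c) j = c * τ (i + j) := by
        simp [T, Module.Basis.constr_apply, basisMonomials]
      rw [T_monomial, map_mul, hτ, aeval_monomial, mul_assoc, ← pow_add, ← Algebra.smul_def,
        ← Algebra.smul_def, LinearMap.map_smul_of_tower]
  have not_injective : ¬ Function.Injective T := fun hT ↦
    Polynomial.not_finite (Module.Finite.of_injective T hT)
  obtain ⟨p, hTp, hp⟩ : ∃ p, T p = 0 ∧ p ≠ 0 := by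
    simpa [injective_iff_map_eq_zero] using not_injective
  refine ⟨p, hp, eq_zero_of_trace_mul_gen_pow pb fun j ↦ ?_⟩
  rw [← algebraMap_T, hTp, Pi.zero_apply, map_zero]

theorem isAlgebraic_of_isAlgebraic_trace_gen_pow (pb : PowerBasis K L)
    (h : ∀ i : ℕ, IsAlgebraic k (Algebra.trace K L (pb.gen ^ i))) : IsAlgebraic k pb.gen := by
  have : IsAlgebraic (algebraicClosure k K) pb.gen :=
    isAlgebraic_of_trace_gen_pow_mem_range pb fun i ↦ ⟨⟨_, mem_algebraicClosure_iff.2 (h i)⟩, rfl⟩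
  exact this.restrictScalars k

end TracePow

section Descent

open IntermediateField
open scoped Differential

theorem exists_isDFinite_and_transcendental {k K E : Type*} [Field k] [Field K] [Field E]
    [CharZero K] [Algebra k K] [Algebra K E] [Algebra k E] [IsScalarTower k K E]
    [Differential k] [Differential K] [Differential E] [DifferentialAlgebra k E]
    [DifferentialAlgebra K E] {y : E} (hy : IsDFinite k y) (hyalg : IsAlgebraic K y)
    (hytr : Transcendental k y) : ∃ x : K, IsDFinite k x ∧ Transcendental k x := by
  have : FiniteDimensional K K⟮y⟯ := adjoin.finiteDimensional hyalg.isIntegral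
  have : IsScalarTower k K⟮y⟯ E := .to₁₃₄ k K K⟮y⟯ E
  let pb : PowerBasis K K⟮y⟯ := adjoin.powerBasis hyalg.isIntegral
  have algebraMap_gen : algebraMap K⟮y⟯ E pb.gen = y := by
    rw [adjoin.powerBasis_gen]; exact AdjoinSimple.algebraMap_gen K y
  have isDFinite_trace (i : ℕ) : IsDFinite k (Algebra.trace K K⟮y⟯ (pb.gen ^ i)) := by
    refine IsDFinite.trace (isDFinite_algebraMap_iff (B := E).1 ?_)
    rw [map_pow, algebraMap_gen]
    exact hy.pow i
  by_contra! hK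
  have isAlgebraic_gen : IsAlgebraic k pb.gen :=
    isAlgebraic_of_isAlgebraic_trace_gen_pow pb fun i ↦ not_not.1 (hK _ (isDFinite_trace i))
  exact hytr (algebraMap_gen ▸ isAlgebraic_gen.algebraMap)

end Descent

section Subfield

/-- The derivation induced by `D` on a subring `B` stable under it, making `B` a differential ring.
`B` ranges over any type of subring-like objects so that subfields are covered. -/
abbrev differentialOfStable {σ A : Type*} [CommRing A] [SetLike σ A] [SubringClass σ A]
    (D : Derivation ℤ A A) (B : σ) (hB : ∀ x ∈ B, D x ∈ B) : Differential B where
  deriv := Derivation.mk'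
    (AddMonoidHom.toIntLinearMap
      { toFun := fun x ↦ ⟨D x, hB x x.2⟩
        map_zero' := by ext; simp
        map_add' := fun x y ↦ by ext; simp })
    fun x y ↦ by ext; simp

theorem isDFinite_iff_exists_lApply {E : Type u} [Field E] [Differential E] (k : Subfield E)
    (x : E) : IsDFinite k x ↔ ∃ (n : ℕ) (a : Fin n → E), (∀ i, a i ∈ k) ∧
      LApply Differential.deriv n a x = 0 :=
  ⟨fun ⟨n, a, hL⟩ ↦ ⟨n, fun i ↦ a i, fun i ↦ (a i).2, hL⟩,
    fun ⟨n, a, ha, hL⟩ ↦ ⟨n, fun i ↦ ⟨a i, ha i⟩, hL⟩⟩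

end Subfield

theorem stmt10_general {E : Type u} [Field E] [CharZero E] (D : Derivation ℤ E E)
    (k K : Subfield E) (hk : ∀ x ∈ k, D x ∈ k) (hK : ∀ x ∈ K, D x ∈ K) (hkK : k ≤ K)
    (y : E) (hytr : Transcendental ↥k y) (hyalg : IsAlgebraic ↥K y)
    (hsol : ∃ (n : ℕ) (a : Fin n → E), (∀ i, a i ∈ k) ∧ LApply (⇑D) n a y = 0) :
    ∃ x, x ∈ K ∧ Transcendental ↥k x ∧
      ∃ (m : ℕ) (b : Fin m → E), (∀ i, b i ∈ k) ∧ LApply (⇑D) m b x = 0 := by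
  let _ : Differential E := ⟨D⟩
  let _ : Differential k := differentialOfStable D k hk
  let _ : Differential K := differentialOfStable D K hK
  let _ : Algebra k K := (Subfield.inclusion hkK).toAlgebra
  have : IsScalarTower k K E := .of_algebraMap_eq fun _ ↦ rfl
  have : DifferentialAlgebra k E := ⟨fun _ ↦ rfl⟩
  have : DifferentialAlgebra K E := ⟨fun _ ↦ rfl⟩
  have hy : IsDFinite k y := (isDFinite_iff_exists_lApply k y).2 hsol
  obtain ⟨x, hx, hxtr⟩ := exists_isDFinite_and_transcendental hy hyalg hytr
  exact ⟨x, x.2, (transcendental_algebraMap_iff (algebraMap K E).injective).2 hxtr,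
    (isDFinite_iff_exists_lApply k _).1 (isDFinite_algebraMap_iff.2 hx)⟩

/-- Let `k ⊂ K ⊆ E` be differential fields with `C_E = C`. If `y ∈ E` is
transcendental over `k`, algebraic over `K` and annihilated by a monic linear differential
operator over `k`, then `K` contains an element transcendental over `k` that is annihilated
by some monic linear differential operator over `k`. -/
theorem stmt10 {E : Type u} [Field E] [CharZero E] (D : Derivation ℤ E E)
    (k K : Subfield E)
    (hk : ∀ x ∈ k, D x ∈ k) (hK : ∀ x ∈ K, D x ∈ K)
    (hC : IsAlgClosed ↥(constantsOf D k))
    (hkK : k < K)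
    (hconst : ∀ x : E, D x = 0 → x ∈ k)
    (y : E) (hytr : Transcendental ↥k y) (hyalg : IsAlgebraic ↥K y)
    (hsol : ∃ (n : ℕ) (a : Fin n → E), (∀ i, a i ∈ k) ∧ LApply (⇑D) n a y = 0) :
    ∃ x, x ∈ K ∧ Transcendental ↥k x ∧
      ∃ (m : ℕ) (b : Fin m → E), (∀ i, b i ∈ k) ∧ LApply (⇑D) m b x = 0 :=
  stmt10_general D k K hk hK hkK.le y hytr hyalg hsol
end
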